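/- arXiv:1506.08317 — 2 statements merged into one kernel-verified Lean document; each statement's English description precedes it below -/
import Mathlib

section
/- Let r = 1 + 1/3^{k+1}, let l ≥ 1, let I ∈ ℐ_l, and let I' ⊂ [0,1) be any triadic interval with |I'| = |I| that intersects ∪_{j≥1} Ω_j. Then ((1/|I'|) ∫_{I'} w_k^r dx)^{1/r} ≤ 3·(3^k/(3^{k−1}+1))^l, where w_k(x) = Σ_{l=1}^∞ (3^k/(3^{k−1}+1))^l · χ_{Ω_l}(x). -/
open MeasureTheory Set Filter Topology
open scoped ENNReal

noncomputable section

namespace RT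

/-- The Hilbert transform `Hf(x)`, defined as the principal-value limit
`lim_{ε→0⁺} ∫_{|x-y|>ε} f(y)/(x-y) dy` (junk value at points where the limit
does not exist). -/
def Hil (f : ℝ → ℝ) (x : ℝ) : ℝ :=
  limUnder (𝓝[>] (0 : ℝ)) fun ε => ∫ y in {y : ℝ | ε < |x - y|}, f y / (x - y)

/-- The (uncentered) Hardy–Littlewood maximal function over bounded intervals:
`Mf(x) = sup_{I ∋ x} (1/|I|) ∫_I |f|`. -/
def HLMax (f : ℝ → ℝ) (x : ℝ) : ℝ≥0∞ :=
  ⨆ (a : ℝ) (b : ℝ) (_ : a < b) (_ : x ∈ Icc a b),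
    (ENNReal.ofReal (b - a))⁻¹ * ∫⁻ y in Ioo a b, ENNReal.ofReal |f y|

/-- `M_r f = (M(|f|^r))^{1/r}`. -/
def Mr (r : ℝ) (f : ℝ → ℝ) (x : ℝ) : ℝ≥0∞ :=
  HLMax (fun y => |f y| ^ r) x ^ (1 / r)

/-- The Orlicz maximal operator
`M_Φ f(x) = sup_{I ∋ x} inf {λ > 0 : (1/|I|) ∫_I Φ(|f|/λ) ≤ 1}`. -/
def MOrlicz (Φ : ℝ → ℝ) (f : ℝ → ℝ) (x : ℝ) : ℝ≥0∞ :=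
  ⨆ (a : ℝ) (b : ℝ) (_ : a < b) (_ : x ∈ Icc a b),
    sInf {lam : ℝ≥0∞ | ∃ l : ℝ, 0 < l ∧ lam = ENNReal.ofReal l ∧
      (∫⁻ y in Ioo a b, ENNReal.ofReal (Φ (|f y| / l))) ≤ ENNReal.ofReal (b - a)}

/-- The centered maximal operator with respect to a weight `v`:
`M^c_v h(x) = sup_{ρ>0} (1/v(B(x,ρ))) ∫_{B(x,ρ)} |h| v`. -/
def Mc (v h : ℝ → ℝ) (x : ℝ) : ℝ≥0∞ :=
  ⨆ (ρ : ℝ) (_ : 0 < ρ),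
    (∫⁻ y in Ioo (x - ρ) (x + ρ), ENNReal.ofReal (v y))⁻¹ *
      ∫⁻ y in Ioo (x - ρ) (x + ρ), ENNReal.ofReal |h y| * ENNReal.ofReal (v y)

/-- A Young function: convex, increasing, `Φ(0) = 0`, `Φ(t)/t → ∞`. -/
structure IsYoung (Φ : ℝ → ℝ) : Prop where
  convexOn : ConvexOn ℝ (Ici 0) Φ
  mono : MonotoneOn Φ (Ici 0)
  map_zero : Φ 0 = 0
  superlinear : Tendsto (fun t => Φ t / t) atTop atTop

/-- A weight: a nonnegative locally integrable function on `ℝ`. -/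
def IsWeight (w : ℝ → ℝ) : Prop :=
  (∀ x, 0 ≤ w x) ∧ LocallyIntegrable w volume

/-! Triadic machinery: intervals are represented by their endpoint pairs,
`(a, b)` corresponding to `[a, b)`. -/

/-- The length of the interval. -/
def len (I : ℝ × ℝ) : ℝ := I.2 - I.1

/-- The set `[a, b)` of the interval `I = (a, b)`. -/
def ivl (I : ℝ × ℝ) : Set ℝ := Ico I.1 I.2

/-- A triadic interval `[3^j n, 3^j (n+1))`, `j, n ∈ ℤ`. -/
def IsTriadic (I : ℝ × ℝ) : Prop :=
  ∃ j n : ℤ, I.1 = (3 : ℝ) ^ j * n ∧ I.2 = (3 : ℝ) ^ j * (n + 1)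

/-- The middle third `I^Δ` of `I`: same center, one third of the length. -/
def mid (I : ℝ × ℝ) : ℝ × ℝ := (I.1 + (I.2 - I.1) / 3, I.2 - (I.2 - I.1) / 3)

/-- `P` assigns to each triadic interval `J ⊆ [0,1)` a triadic interval
adjacent to `J^Δ` (on its left or on its right) with `|P J| = 3^{-k} |J|`. -/
def GoodP (k : ℕ) (P : ℝ × ℝ → ℝ × ℝ) : Prop :=
  ∀ J : ℝ × ℝ, IsTriadic J → ivl J ⊆ Ico (0 : ℝ) 1 →
    IsTriadic (P J) ∧ len (P J) = len J / 3 ^ k ∧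
      ((P J).2 = (mid J).1 ∨ (P J).1 = (mid J).2)

/-- The families `𝒥_l`: `𝒥_1 = {[0,1)}`, and `𝒥_{l+1}` consists of the `3^{k-1}`
triadic subintervals of `J^Δ` of length `|J|/3^k`, for each `J ∈ 𝒥_l`.
(`𝒥_0` is empty.) -/
def Jfam (k : ℕ) : ℕ → Set (ℝ × ℝ)
  | 0 => ∅
  | 1 => {((0 : ℝ), (1 : ℝ))}
  | l + 2 => {J' | IsTriadic J' ∧ ∃ J ∈ Jfam k (l + 1),
      len J' = len J / 3 ^ k ∧ ivl J' ⊆ ivl (mid J)}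

/-- The families `ℐ_l = {P J : J ∈ 𝒥_l}`. -/
def Ifam (k : ℕ) (P : ℝ × ℝ → ℝ × ℝ) (l : ℕ) : Set (ℝ × ℝ) :=
  P '' Jfam k l

/-- `Ω_l = ⋃_{I ∈ ℐ_l} I`. -/
def Omega (k : ℕ) (P : ℝ × ℝ → ℝ × ℝ) (l : ℕ) : Set ℝ :=
  ⋃ I ∈ Ifam k P l, ivl I

/-- The constant `3^k / (3^{k-1} + 1)`. -/
def alpha (k : ℕ) : ℝ := 3 ^ k / (3 ^ (k - 1) + 1)

/-- The Reguera–Thiele weight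
`w_k = ∑_{l=1}^∞ (3^k/(3^{k-1}+1))^l χ_{Ω_l}`. -/
def wk (k : ℕ) (P : ℝ × ℝ → ℝ × ℝ) (x : ℝ) : ℝ :=
  ∑' l : ℕ, alpha k ^ (l + 1) * (Omega k P (l + 1)).indicator (fun _ => (1 : ℝ)) x

/-!
Write `U_l` for the union of the intervals of `𝒥_l`. Since `P J` lies in `J` but off its middle
third, `Ω_l ⊆ U_l \ U_{l+1}`; hence the `Ω_l` are disjoint and `w_k ^ r = ∑ α ^ (r l) χ_{Ω_l}`.

Let `I` be triadic of length `3 ^ (-k l)`. If `I` misses `U_{l+1}`, then only `Ω_1, …, Ω_l` can meet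
it and `w_k ≤ α ^ l` on `I`. Otherwise `I ∈ 𝒥_{l+1}`. Each generation keeps at most a third of `U`,
so `U_{l+1+i}` fills at most `3 ^ (-i)` of `I` and `Ω_{l+1+i}` at most `3 ^ (-k-i)`. The average of
`w_k ^ r` over `I` is thus at most a geometric series of ratio `α ^ r / 3`, with sum
`α ^ (r l) * (α ^ r / 3 ^ k) / (1 - α ^ r / 3)`. For `r = 1` that sum is `α ^ l`, and
`r ≤ 1 + 3 ^ (-k-1)` is close enough to `1` to keep it below `3 α ^ (r l)`.
-/

section Triadic

variable {I I' : ℝ × ℝ}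

lemma measurableSet_ivl (I : ℝ × ℝ) : MeasurableSet (ivl I) := measurableSet_Ico

lemma volume_ivl (I : ℝ × ℝ) : volume (ivl I) = ENNReal.ofReal (len I) := Real.volume_Ico

lemma len_mid (I : ℝ × ℝ) : len (mid I) = len I / 3 := by
  simp only [len, mid]
  ring

lemma ivl_mid_subset (hI : 0 ≤ len I) : ivl (mid I) ⊆ ivl I := by
  rw [len] at hI
  apply Ico_subset_Ico <;> simp only [mid] <;> linarith

lemma volume_ivl_of_len_eq_div {n : ℕ} (hn : 0 < n) (h : len I' = len I / n) :
    volume (ivl I') = (n : ℝ≥0∞)⁻¹ * volume (ivl I) := by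
  rw [volume_ivl, volume_ivl, h, ENNReal.ofReal_div_of_pos (by positivity), ENNReal.ofReal_natCast,
    ENNReal.div_eq_inv_mul]

namespace IsTriadic

lemma len_pos (hI : IsTriadic I) : 0 < len I := by
  obtain ⟨j, n, h₁, h₂⟩ := hI
  rw [len, h₁, h₂, ← mul_sub, add_sub_cancel_left, mul_one]
  positivity

lemma ivl_subset_of_len_le (hI : IsTriadic I) (hI' : IsTriadic I') (hlen : len I' ≤ len I)
    (hmeet : (ivl I ∩ ivl I').Nonempty) : ivl I' ⊆ ivl I := by
  obtain ⟨x, ⟨hx₁, hx₂⟩, hx₁', hx₂'⟩ := hmeet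
  obtain ⟨b, m, h₁, h₂⟩ := hI
  obtain ⟨a, n, h₁', h₂'⟩ := hI'
  obtain ⟨d, rfl⟩ : ∃ d : ℕ, b = a + d := by
    have hpow : (3 : ℝ) ^ a ≤ 3 ^ b := by
      simp only [len, h₁, h₂, h₁', h₂'] at hlen
      linarith
    obtain ⟨d, hd⟩ := Int.le.dest ((zpow_le_zpow_iff_right₀ (by norm_num)).1 hpow)
    exact ⟨d, hd.symm⟩
  have ha : (0 : ℝ) < 3 ^ a := by positivity
  rw [zpow_add₀ (by norm_num), zpow_natCast, mul_assoc] at h₁ h₂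
  -- In units of `3 ^ a` all four endpoints are integers, so strict inequalities gain a full unit.
  have hleft : (3 : ℤ) ^ d * m < n + 1 := by
    have : (3 : ℝ) ^ a * (3 ^ d * m) < 3 ^ a * (n + 1) := h₁ ▸ h₂' ▸ hx₁.trans_lt hx₂'
    exact_mod_cast lt_of_mul_lt_mul_left this ha.le
  have hright : n < (3 : ℤ) ^ d * (m + 1) := by
    have : (3 : ℝ) ^ a * n < 3 ^ a * (3 ^ d * (m + 1)) := h₁' ▸ h₂ ▸ hx₁'.trans_lt hx₂
    exact_mod_cast lt_of_mul_lt_mul_left this ha.le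
  apply Ico_subset_Ico
  · rw [h₁, h₁']
    exact mul_le_mul_of_nonneg_left (by exact_mod_cast Int.lt_add_one_iff.1 hleft) ha.le
  · rw [h₂, h₂']
    exact mul_le_mul_of_nonneg_left (by exact_mod_cast hright) ha.le

lemma eq_of_len_eq (hI : IsTriadic I) (hI' : IsTriadic I') (hlen : len I' = len I)
    (hmeet : (ivl I ∩ ivl I').Nonempty) : I' = I := by
  have h : ivl I' = ivl I :=
    (hI.ivl_subset_of_len_le hI' hlen.le hmeet).antisymm
      (hI'.ivl_subset_of_len_le hI hlen.ge (inter_comm _ _ ▸ hmeet))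
  have hlt : I'.1 < I'.2 := sub_pos.1 hI'.len_pos
  obtain ⟨h₁, h₂⟩ := (Ico_eq_Ico_iff (Or.inl hlt)).1 h
  exact Prod.ext h₁ h₂

end IsTriadic

lemma countable_setOf_isTriadic : {I | IsTriadic I}.Countable := by
  refine (countable_range fun p : ℤ × ℤ ↦
    (((3 : ℝ) ^ p.1 * p.2, (3 : ℝ) ^ p.1 * (p.2 + 1)) : ℝ × ℝ)).mono ?_
  rintro I ⟨j, n, h₁, h₂⟩
  exact ⟨(j, n), Prod.ext h₁.symm h₂.symm⟩

end Triadic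

namespace GoodP

variable {k : ℕ} {P : ℝ × ℝ → ℝ × ℝ} {J : ℝ × ℝ}

lemma ivl_subset (hP : GoodP k P) (hk : 1 ≤ k) (hJ : IsTriadic J) (hJ01 : ivl J ⊆ Ico 0 1) :
    ivl (P J) ⊆ ivl J := by
  obtain ⟨-, hlen, hadj⟩ := hP J hJ hJ01
  have hle : len (P J) ≤ len J / 3 := by
    rw [hlen]
    exact div_le_div_of_nonneg_left hJ.len_pos.le (by norm_num)
      (le_self_pow₀ (by norm_num) (by omega))
  have hpos := hJ.len_pos
  simp only [len, mid] at hle hpos hadj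
  apply Ico_subset_Ico <;> rcases hadj with h | h <;> linarith

lemma disjoint_ivl_mid (hP : GoodP k P) (hJ : IsTriadic J) (hJ01 : ivl J ⊆ Ico 0 1) :
    Disjoint (ivl (P J)) (ivl (mid J)) := by
  obtain ⟨-, -, hadj⟩ := hP J hJ hJ01
  refine Set.disjoint_left.2 fun x hx hx' ↦ ?_
  rcases hadj with h | h
  · exact (hx.2.trans_le (h.trans_le hx'.1)).false
  · exact (hx'.2.trans_le (h.symm.trans_le hx.1)).false

end GoodP

section Families

variable {k l : ℕ} {P : ℝ × ℝ → ℝ × ℝ} {J : ℝ × ℝ}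

lemma isTriadic_of_mem_Jfam (hJ : J ∈ Jfam k l) : IsTriadic J := by
  match l, hJ with
  | 1, hJ =>
    rw [Jfam, mem_singleton_iff] at hJ
    exact hJ ▸ ⟨0, 0, by simp, by simp⟩
  | _ + 2, hJ => exact hJ.1

lemma len_of_mem_Jfam (hJ : J ∈ Jfam k (l + 1)) : len J = ((3 : ℝ) ^ k)⁻¹ ^ l := by
  induction l generalizing J with
  | zero =>
    rw [Jfam, mem_singleton_iff] at hJ
    simp [hJ, len]
  | succ l ih =>
    obtain ⟨-, J₀, hJ₀, hlen, -⟩ := hJ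
    rw [hlen, ih hJ₀, pow_succ, div_eq_mul_inv]

lemma ivl_subset_of_mem_Jfam (hJ : J ∈ Jfam k l) : ivl J ⊆ Ico 0 1 := by
  induction l using Jfam.induct generalizing J with
  | case1 => exact hJ.elim
  | case2 =>
    rw [Jfam, mem_singleton_iff] at hJ
    simp [hJ, ivl]
  | case3 l ih =>
    obtain ⟨-, J₀, hJ₀, -, hsub⟩ := hJ
    exact hsub.trans ((ivl_mid_subset (isTriadic_of_mem_Jfam hJ₀).len_pos.le).trans (ih hJ₀))

lemma len_eq_of_mem_Jfam {J' : ℝ × ℝ} (hJ : J ∈ Jfam k l) (hJ' : J' ∈ Jfam k l) :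
    len J' = len J := by
  match l, hJ, hJ' with
  | l + 1, hJ, hJ' => rw [len_of_mem_Jfam hJ, len_of_mem_Jfam hJ']

lemma countable_Jfam (k l : ℕ) : (Jfam k l).Countable :=
  countable_setOf_isTriadic.mono fun _ ↦ isTriadic_of_mem_Jfam

lemma pairwiseDisjoint_Jfam (k l : ℕ) : (Jfam k l).PairwiseDisjoint ivl := by
  intro J hJ J' hJ' hne
  by_contra hmeet
  exact hne ((isTriadic_of_mem_Jfam hJ).eq_of_len_eq (isTriadic_of_mem_Jfam hJ')
    (len_eq_of_mem_Jfam hJ hJ') (not_disjoint_iff_nonempty_inter.1 hmeet)).symm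

lemma len_of_mem_Ifam (hP : GoodP k P) {I : ℝ × ℝ} (hI : I ∈ Ifam k P l) :
    len I = ((3 : ℝ) ^ k)⁻¹ ^ l := by
  obtain ⟨J, hJ, rfl⟩ := hI
  match l, hJ with
  | l + 1, hJ =>
    rw [(hP J (isTriadic_of_mem_Jfam hJ) (ivl_subset_of_mem_Jfam hJ)).2.1, len_of_mem_Jfam hJ,
      pow_succ, div_eq_mul_inv]

lemma mem_Omega {x : ℝ} : x ∈ Omega k P l ↔ ∃ J ∈ Jfam k l, x ∈ ivl (P J) := by
  simp only [Omega, Ifam, biUnion_image, mem_iUnion, exists_prop]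

lemma measurableSet_Omega (k : ℕ) (P : ℝ × ℝ → ℝ × ℝ) (l : ℕ) : MeasurableSet (Omega k P l) :=
  .biUnion ((countable_Jfam k l).image P) fun I _ ↦ measurableSet_ivl I

/-- The union of the intervals of `𝒥_l`. The sets `Ω_l` live on the successive differences of this
sequence, which decreases from `l = 1` on (for `l = 0` it is empty, like `𝒥_0`). -/
def JUnion (k l : ℕ) : Set ℝ :=
  ⋃ J ∈ Jfam k l, ivl J

lemma mem_JUnion {x : ℝ} : x ∈ JUnion k l ↔ ∃ J ∈ Jfam k l, x ∈ ivl J := by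
  simp only [JUnion, mem_iUnion, exists_prop]

lemma JUnion_inter_ivl (hJ : J ∈ Jfam k l) : JUnion k l ∩ ivl J = ivl J :=
  inter_eq_right.2 (subset_biUnion_of_mem hJ)

lemma JUnion_succ_inter_ivl_subset (hJ : J ∈ Jfam k l) :
    JUnion k (l + 1) ∩ ivl J ⊆ ivl (mid J) := by
  rintro x ⟨hx, hxJ⟩
  match l, hJ with
  | l + 1, hJ =>
    obtain ⟨J', ⟨-, J₀, hJ₀, -, hsub⟩, hxJ'⟩ := mem_JUnion.1 hx
    have hxJ₀ := ivl_mid_subset (isTriadic_of_mem_Jfam hJ₀).len_pos.le (hsub hxJ')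
    rw [(pairwiseDisjoint_Jfam k (l + 1)).elim_set hJ hJ₀ x hxJ hxJ₀]
    exact hsub hxJ'

lemma antitone_JUnion_succ (k : ℕ) : Antitone fun l ↦ JUnion k (l + 1) := by
  refine antitone_nat_of_succ_le fun l x hx ↦ ?_
  obtain ⟨J', ⟨-, J, hJ, -, hsub⟩, hxJ'⟩ := mem_JUnion.1 hx
  exact mem_JUnion.2
    ⟨J, hJ, ivl_mid_subset (isTriadic_of_mem_Jfam hJ).len_pos.le (hsub hxJ')⟩

lemma Omega_subset_JUnion (hk : 1 ≤ k) (hP : GoodP k P) (l : ℕ) : Omega k P l ⊆ JUnion k l := by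
  intro x hx
  obtain ⟨J, hJ, hxP⟩ := mem_Omega.1 hx
  exact mem_JUnion.2
    ⟨J, hJ, hP.ivl_subset hk (isTriadic_of_mem_Jfam hJ) (ivl_subset_of_mem_Jfam hJ) hxP⟩

lemma Omega_inter_ivl_subset (hk : 1 ≤ k) (hP : GoodP k P) (hJ : J ∈ Jfam k l) :
    Omega k P l ∩ ivl J ⊆ ivl (P J) := by
  rintro x ⟨hx, hxJ⟩
  obtain ⟨J₀, hJ₀, hxP⟩ := mem_Omega.1 hx
  have hxJ₀ := hP.ivl_subset hk (isTriadic_of_mem_Jfam hJ₀) (ivl_subset_of_mem_Jfam hJ₀) hxP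
  rwa [(pairwiseDisjoint_Jfam k l).elim_set hJ hJ₀ x hxJ hxJ₀]

lemma disjoint_Omega_JUnion (hk : 1 ≤ k) (hP : GoodP k P) {l m : ℕ} (hlm : l < m) :
    Disjoint (Omega k P l) (JUnion k m) := by
  refine Set.disjoint_left.2 fun x hx hxm ↦ ?_
  obtain ⟨J, hJ, hxP⟩ := mem_Omega.1 hx
  have hJtri := isTriadic_of_mem_Jfam hJ
  have hJ01 := ivl_subset_of_mem_Jfam hJ
  obtain ⟨m, rfl⟩ := Nat.exists_eq_succ_of_ne_zero (Nat.ne_zero_of_lt hlm)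
  have hxl : x ∈ JUnion k (l + 1) := antitone_JUnion_succ k (Nat.le_of_lt_succ hlm) hxm
  exact Set.disjoint_left.1 (hP.disjoint_ivl_mid hJtri hJ01) hxP
    (JUnion_succ_inter_ivl_subset hJ ⟨hxl, hP.ivl_subset hk hJtri hJ01 hxP⟩)

lemma pairwise_disjoint_Omega (hk : 1 ≤ k) (hP : GoodP k P) :
    Pairwise (Function.onFun Disjoint (Omega k P)) :=
  (pairwise_disjoint_on _).2 fun _ m hlm ↦
    (disjoint_Omega_JUnion hk hP hlm).mono_right (Omega_subset_JUnion hk hP m)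

end Families

section Measure

lemma measure_inter_biUnion_le_mul {α ι : Type*} [MeasurableSpace α] {μ : Measure α} {s : Set ι}
    {f : ι → Set α} (hs : s.Countable) (hd : s.PairwiseDisjoint f)
    (hf : ∀ i ∈ s, MeasurableSet (f i)) {E F : Set α} {c : ℝ≥0∞}
    (h : ∀ i ∈ s, μ (f i ∩ E) ≤ c * μ (f i ∩ F)) :
    μ ((⋃ i ∈ s, f i) ∩ E) ≤ c * μ ((⋃ i ∈ s, f i) ∩ F) := by
  have hmeas : MeasurableSet (⋃ i ∈ s, f i) := .biUnion hs hf
  rw [← Measure.restrict_apply hmeas, ← Measure.restrict_apply hmeas, measure_biUnion hs hd hf,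
    measure_biUnion hs hd hf, ← ENNReal.tsum_mul_left]
  refine ENNReal.tsum_le_tsum fun i ↦ ?_
  rw [Measure.restrict_apply (hf i i.2), Measure.restrict_apply (hf i i.2)]
  exact h i i.2

variable {k l : ℕ} {P : ℝ × ℝ → ℝ × ℝ} {J : ℝ × ℝ}

lemma volume_inter_ivl_le_mul (hJ : J ∈ Jfam k (l + 1)) {i : ℕ} {E : Set ℝ} {c : ℝ≥0∞}
    (hE : E ⊆ JUnion k (l + 1 + i))
    (h : ∀ J' ∈ Jfam k (l + 1 + i), volume (E ∩ ivl J') ≤ c * volume (ivl J')) :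
    volume (E ∩ ivl J) ≤ c * volume (JUnion k (l + 1 + i) ∩ ivl J) := by
  have hcover : E ∩ ivl J = JUnion k (l + 1 + i) ∩ (E ∩ ivl J) :=
    (inter_eq_right.2 (inter_subset_left.trans hE)).symm
  rw [hcover]
  refine measure_inter_biUnion_le_mul (countable_Jfam _ _) (pairwiseDisjoint_Jfam _ _)
    (fun J' _ ↦ measurableSet_ivl J') fun J' hJ' ↦ ?_
  rcases disjoint_or_nonempty_inter (ivl J) (ivl J') with hdisj | hmeet
  · rw [← inter_assoc, inter_right_comm, hdisj.symm.inter_eq, empty_inter, measure_empty]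
    exact zero_le
  · have hlen : len J' ≤ len J := by
      rw [add_right_comm] at hJ'
      rw [len_of_mem_Jfam hJ, len_of_mem_Jfam hJ']
      exact pow_le_pow_of_le_one (by positivity)
        (inv_le_one_of_one_le₀ (one_le_pow₀ (by norm_num))) (Nat.le_add_right l i)
    have hsub : ivl J' ⊆ ivl J := (isTriadic_of_mem_Jfam hJ).ivl_subset_of_len_le
      (isTriadic_of_mem_Jfam hJ') hlen hmeet
    rw [inter_eq_left.2 hsub]
    calc volume (ivl J' ∩ (E ∩ ivl J)) ≤ volume (E ∩ ivl J') :=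
          measure_mono fun x hx ↦ ⟨hx.2.1, hx.1⟩
      _ ≤ c * volume (ivl J') := h J' hJ'

lemma volume_JUnion_inter_ivl_le (hJ : J ∈ Jfam k (l + 1)) (i : ℕ) :
    volume (JUnion k (l + 1 + i) ∩ ivl J) ≤ 3⁻¹ ^ i * volume (ivl J) := by
  induction i with
  | zero => simp [JUnion_inter_ivl hJ]
  | succ i ih =>
    have hsub : JUnion k (l + 1 + i + 1) ⊆ JUnion k (l + 1 + i) := by
      rw [add_right_comm l 1 i]
      exact antitone_JUnion_succ k (Nat.le_succ _)
    have hstep : ∀ J' ∈ Jfam k (l + 1 + i),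
        volume (JUnion k (l + 1 + i + 1) ∩ ivl J') ≤ 3⁻¹ * volume (ivl J') := fun J' hJ' ↦
      (measure_mono (JUnion_succ_inter_ivl_subset hJ')).trans_eq
        (volume_ivl_of_len_eq_div (n := 3) (by norm_num) (len_mid J'))
    calc volume (JUnion k (l + 1 + (i + 1)) ∩ ivl J)
        ≤ 3⁻¹ * volume (JUnion k (l + 1 + i) ∩ ivl J) := volume_inter_ivl_le_mul hJ hsub hstep
      _ ≤ 3⁻¹ * (3⁻¹ ^ i * volume (ivl J)) := by gcongr
      _ = 3⁻¹ ^ (i + 1) * volume (ivl J) := by rw [pow_succ', mul_assoc]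

lemma volume_Omega_inter_ivl_le (hk : 1 ≤ k) (hP : GoodP k P) (hJ : J ∈ Jfam k (l + 1)) (i : ℕ) :
    volume (Omega k P (l + 1 + i) ∩ ivl J) ≤ (3 ^ k)⁻¹ * (3⁻¹ ^ i * volume (ivl J)) := by
  have hstep : ∀ J' ∈ Jfam k (l + 1 + i),
      volume (Omega k P (l + 1 + i) ∩ ivl J') ≤ (3 ^ k)⁻¹ * volume (ivl J') := by
    intro J' hJ'
    have hlen := (hP J' (isTriadic_of_mem_Jfam hJ') (ivl_subset_of_mem_Jfam hJ')).2.1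
    have hvol := volume_ivl_of_len_eq_div (n := 3 ^ k) (by positivity) (by exact_mod_cast hlen)
    exact (measure_mono (Omega_inter_ivl_subset hk hP hJ')).trans_eq (by exact_mod_cast hvol)
  calc volume (Omega k P (l + 1 + i) ∩ ivl J)
      ≤ (3 ^ k)⁻¹ * volume (JUnion k (l + 1 + i) ∩ ivl J) :=
        volume_inter_ivl_le_mul hJ (Omega_subset_JUnion hk hP _) hstep
    _ ≤ (3 ^ k)⁻¹ * (3⁻¹ ^ i * volume (ivl J)) := by
        gcongr
        exact volume_JUnion_inter_ivl_le hJ i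

end Measure

section Alpha

variable {k : ℕ} {r : ℝ}

lemma alpha_pos (k : ℕ) : 0 < alpha k := by
  unfold alpha
  positivity

lemma three_pow_eq (hk : 1 ≤ k) : (3 : ℝ) ^ k = 3 * 3 ^ (k - 1) := by
  rw [← pow_succ', Nat.sub_add_cancel hk]

lemma one_le_alpha (hk : 1 ≤ k) : 1 ≤ alpha k := by
  have h : (1 : ℝ) ≤ 3 ^ (k - 1) := one_le_pow₀ (by norm_num)
  rw [alpha, le_div_iff₀ (by positivity), three_pow_eq hk]
  linarith

lemma alpha_le_three (hk : 1 ≤ k) : alpha k ≤ 3 := by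
  rw [alpha, div_le_iff₀ (by positivity), three_pow_eq hk]
  linarith

lemma alpha_rpow_le (hk : 1 ≤ k) (hr : r ≤ 1 + 1 / (3 : ℝ) ^ (k + 1)) :
    alpha k ^ r ≤ (3 ^ k + 2 / 3) / (3 ^ (k - 1) + 1) := by
  set ε : ℝ := 1 / 3 ^ (k + 1) with hε
  have hε1 : ε ≤ 1 := div_le_one_of_le₀ (one_le_pow₀ (by norm_num)) (by positivity)
  -- Bernoulli's inequality for `3 = 1 + 2`.
  have hexcess : alpha k ^ ε ≤ 1 + ε * 2 :=
    calc alpha k ^ ε ≤ (1 + 2) ^ ε := by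
          gcongr
          · exact (alpha_pos k).le
          · linarith [alpha_le_three hk]
      _ ≤ 1 + ε * 2 := rpow_one_add_le_one_add_mul_self (by norm_num) (by positivity) hε1
  calc alpha k ^ r ≤ alpha k ^ (1 + ε) := Real.rpow_le_rpow_of_exponent_le (one_le_alpha hk) hr
    _ = alpha k * alpha k ^ ε := by rw [Real.rpow_add (alpha_pos k), Real.rpow_one]
    _ ≤ alpha k * (1 + ε * 2) := mul_le_mul_of_nonneg_left hexcess (alpha_pos k).le
    _ = (3 ^ k + 2 / 3) / (3 ^ (k - 1) + 1) := by
        rw [alpha, hε, pow_succ]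
        field_simp

lemma alpha_rpow_lt_three (hk : 1 ≤ k) (hr : r ≤ 1 + 1 / (3 : ℝ) ^ (k + 1)) : alpha k ^ r < 3 := by
  refine (alpha_rpow_le hk hr).trans_lt ?_
  rw [div_lt_iff₀ (by positivity), three_pow_eq hk]
  linarith

lemma alpha_rpow_mul_inv_le_three (hk : 1 ≤ k) (hr : r ≤ 1 + 1 / (3 : ℝ) ^ (k + 1)) :
    alpha k ^ r * (3 ^ k)⁻¹ * (1 - alpha k ^ r / 3)⁻¹ ≤ 3 := by
  have hlt := alpha_rpow_lt_three hk hr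
  have hle := alpha_rpow_le hk hr
  have hN : (1 : ℝ) ≤ 3 ^ (k - 1) := one_le_pow₀ (by norm_num)
  rw [three_pow_eq hk] at hle ⊢
  generalize (3 : ℝ) ^ (k - 1) = N at hle hN
  generalize alpha k ^ r = A at hlt hle
  rw [← div_eq_mul_inv, ← div_eq_mul_inv, div_le_iff₀ (by linarith), div_le_iff₀ (by positivity)]
  suffices A * (3 * N + 1) ≤ 9 * N by linarith
  calc A * (3 * N + 1) ≤ (3 * N + 2 / 3) / (N + 1) * (3 * N + 1) := by gcongr
    _ ≤ 9 * N := by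
      rw [div_mul_eq_mul_div, div_le_iff₀ (by positivity)]
      nlinarith

end Alpha

section Weight

variable {k l : ℕ} {P : ℝ × ℝ → ℝ × ℝ} {r x : ℝ}

lemma wk_nonneg (k : ℕ) (P : ℝ × ℝ → ℝ × ℝ) (x : ℝ) : 0 ≤ wk k P x :=
  tsum_nonneg fun _ ↦ mul_nonneg (pow_nonneg (alpha_pos k).le _)
    (indicator_nonneg (fun _ _ ↦ zero_le_one) _)

lemma wk_of_mem_Omega (hk : 1 ≤ k) (hP : GoodP k P) (hx : x ∈ Omega k P (l + 1)) :
    wk k P x = alpha k ^ (l + 1) := by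
  rw [wk, tsum_eq_single l, indicator_of_mem hx, mul_one]
  intro m hm
  have hxm : x ∉ Omega k P (m + 1) :=
    Set.disjoint_left.1 (pairwise_disjoint_Omega hk hP (by simpa using hm.symm)) hx
  rw [indicator_of_notMem hxm, mul_zero]

lemma wk_of_forall_notMem_Omega (hx : ∀ l, x ∉ Omega k P (l + 1)) : wk k P x = 0 := by
  simp [wk, hx]

lemma wk_le_of_notMem_JUnion (hk : 1 ≤ k) (hP : GoodP k P) (hx : x ∉ JUnion k (l + 1)) :
    wk k P x ≤ alpha k ^ l := by
  by_cases hxΩ : ∃ m, x ∈ Omega k P (m + 1)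
  · obtain ⟨m, hm⟩ := hxΩ
    have hml : m + 1 ≤ l := by
      by_contra! hlm
      exact hx (antitone_JUnion_succ k (Nat.le_of_lt_succ hlm) (Omega_subset_JUnion hk hP _ hm))
    rw [wk_of_mem_Omega hk hP hm]
    exact pow_le_pow_right₀ (one_le_alpha hk) hml
  · rw [wk_of_forall_notMem_Omega (not_exists.1 hxΩ)]
    exact pow_nonneg (alpha_pos k).le l

lemma ofReal_wk_rpow (hk : 1 ≤ k) (hP : GoodP k P) (hr : 0 < r) (x : ℝ) :
    ENNReal.ofReal (wk k P x ^ r) = ∑' l : ℕ, (Omega k P (l + 1)).indicator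
      (fun _ ↦ ENNReal.ofReal (alpha k ^ r) ^ (l + 1)) x := by
  by_cases hx : ∃ l, x ∈ Omega k P (l + 1)
  · obtain ⟨l, hl⟩ := hx
    have hα := (alpha_pos k).le
    rw [tsum_eq_single l, indicator_of_mem hl, wk_of_mem_Omega hk hP hl, ← Real.rpow_pow_comm hα,
      ENNReal.ofReal_pow (Real.rpow_nonneg hα r)]
    intro m hm
    exact indicator_of_notMem
      (Set.disjoint_left.1 (pairwise_disjoint_Omega hk hP (by simpa using hm.symm)) hl) _
  · have hx' := not_exists.1 hx
    simp [wk_of_forall_notMem_Omega hx', hx', Real.zero_rpow hr.ne']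

lemma setLIntegral_wk_rpow (hk : 1 ≤ k) (hP : GoodP k P) (hr : 0 < r) (s : Set ℝ) :
    ∫⁻ x in s, ENNReal.ofReal (wk k P x ^ r) =
      ∑' l : ℕ, ENNReal.ofReal (alpha k ^ r) ^ (l + 1) * volume (Omega k P (l + 1) ∩ s) := by
  have hmeas (l : ℕ) := measurableSet_Omega k P (l + 1)
  simp_rw [ofReal_wk_rpow hk hP hr]
  rw [lintegral_tsum fun l ↦ (measurable_const.indicator (hmeas l)).aemeasurable]
  simp_rw [lintegral_indicator_const (hmeas _), Measure.restrict_apply (hmeas _)]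

variable {J : ℝ × ℝ}

lemma setLIntegral_wk_rpow_le (hk : 1 ≤ k) (hP : GoodP k P) (hr : 0 < r)
    (hJ : J ∈ Jfam k (l + 1)) :
    ∫⁻ x in ivl J, ENNReal.ofReal (wk k P x ^ r) ≤
      ENNReal.ofReal (alpha k ^ r) ^ (l + 1) * (3 ^ k)⁻¹ *
        (1 - ENNReal.ofReal (alpha k ^ r) / 3)⁻¹ * volume (ivl J) := by
  set A := ENNReal.ofReal (alpha k ^ r)
  have hearly : ∀ m < l, A ^ (m + 1) * volume (Omega k P (m + 1) ∩ ivl J) = 0 := by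
    intro m hm
    have hdisj : Disjoint (Omega k P (m + 1)) (ivl J) :=
      (disjoint_Omega_JUnion hk hP (Nat.succ_lt_succ hm)).mono_right (subset_biUnion_of_mem hJ)
    rw [hdisj.inter_eq, measure_empty, mul_zero]
  have hlate (i : ℕ) : A ^ (i + l + 1) * volume (Omega k P (i + l + 1) ∩ ivl J) ≤
      A ^ (l + 1) * (3 ^ k)⁻¹ * volume (ivl J) * (A / 3) ^ i := by
    rw [show i + l + 1 = l + 1 + i by ring]
    calc A ^ (l + 1 + i) * volume (Omega k P (l + 1 + i) ∩ ivl J)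
        ≤ A ^ (l + 1 + i) * ((3 ^ k)⁻¹ * (3⁻¹ ^ i * volume (ivl J))) := by
          gcongr
          exact volume_Omega_inter_ivl_le hk hP hJ i
      _ = A ^ (l + 1) * (3 ^ k)⁻¹ * volume (ivl J) * (A / 3) ^ i := by
          rw [div_eq_mul_inv, mul_pow, pow_add]
          ring
  calc ∫⁻ x in ivl J, ENNReal.ofReal (wk k P x ^ r)
      = ∑' i, A ^ (i + l + 1) * volume (Omega k P (i + l + 1) ∩ ivl J) := by
        rw [setLIntegral_wk_rpow hk hP hr, ← Summable.sum_add_tsum_nat_add' ENNReal.summable,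
          Finset.sum_eq_zero fun m hm ↦ hearly m (Finset.mem_range.1 hm), zero_add]
    _ ≤ ∑' i, A ^ (l + 1) * (3 ^ k)⁻¹ * volume (ivl J) * (A / 3) ^ i :=
        ENNReal.tsum_le_tsum hlate
    _ = A ^ (l + 1) * (3 ^ k)⁻¹ * (1 - A / 3)⁻¹ * volume (ivl J) := by
        rw [ENNReal.tsum_mul_left, ENNReal.tsum_geometric, mul_right_comm]

lemma average_wk_rpow_le_of_mem_Jfam (hk : 1 ≤ k) (hP : GoodP k P) (hr₀ : 0 < r)
    (hr : r ≤ 1 + 1 / (3 : ℝ) ^ (k + 1)) (hJ : J ∈ Jfam k (l + 1)) :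
    (len J)⁻¹ * ∫ x in ivl J, wk k P x ^ r ≤ 3 * (alpha k ^ r) ^ l := by
  set A := alpha k ^ r
  have hA : 0 ≤ A := Real.rpow_nonneg (alpha_pos k).le r
  have hA3 : 0 < 1 - A / 3 := by linarith [alpha_rpow_lt_three hk hr]
  have hlen := (isTriadic_of_mem_Jfam hJ).len_pos
  have hbound : ENNReal.ofReal A ^ (l + 1) * (3 ^ k)⁻¹ * (1 - ENNReal.ofReal A / 3)⁻¹ *
      volume (ivl J) = ENNReal.ofReal (A ^ (l + 1) * (3 ^ k)⁻¹ * (1 - A / 3)⁻¹ * len J) := by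
    rw [volume_ivl, ENNReal.ofReal_mul (by positivity), ENNReal.ofReal_mul (by positivity),
      ENNReal.ofReal_mul (by positivity), ENNReal.ofReal_inv_of_pos hA3,
      ENNReal.ofReal_sub _ (by positivity), ENNReal.ofReal_div_of_pos three_pos,
      ENNReal.ofReal_inv_of_pos (by positivity), ENNReal.ofReal_pow hA,
      ENNReal.ofReal_pow zero_le_three, ENNReal.ofReal_one, ENNReal.ofReal_ofNat]
  have hint : ∫ x in ivl J, wk k P x ^ r ≤
      A ^ (l + 1) * (3 ^ k)⁻¹ * (1 - A / 3)⁻¹ * len J := by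
    refine (Real.le_norm_self _).trans ((norm_integral_le_lintegral_norm _).trans ?_)
    simp_rw [Real.norm_of_nonneg (Real.rpow_nonneg (wk_nonneg k P _) r)]
    exact ENNReal.toReal_le_of_le_ofReal (by positivity)
      ((setLIntegral_wk_rpow_le hk hP hr₀ hJ).trans_eq hbound)
  calc (len J)⁻¹ * ∫ x in ivl J, wk k P x ^ r
      ≤ (len J)⁻¹ * (A ^ (l + 1) * (3 ^ k)⁻¹ * (1 - A / 3)⁻¹ * len J) := by gcongr
    _ = A * (3 ^ k)⁻¹ * (1 - A / 3)⁻¹ * A ^ l := by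
        rw [pow_succ]
        field_simp
    _ ≤ 3 * A ^ l := by
        gcongr
        exact alpha_rpow_mul_inv_le_three hk hr

lemma average_wk_rpow_le_of_disjoint_JUnion (hk : 1 ≤ k) (hP : GoodP k P) (hr : 0 ≤ r)
    {I : ℝ × ℝ} (hI : 0 < len I) (hdisj : Disjoint (ivl I) (JUnion k (l + 1))) :
    (len I)⁻¹ * ∫ x in ivl I, wk k P x ^ r ≤ (alpha k ^ r) ^ l := by
  have hpt : ∀ x ∈ ivl I, ‖wk k P x ^ r‖ ≤ (alpha k ^ r) ^ l := by
    intro x hx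
    rw [Real.norm_of_nonneg (Real.rpow_nonneg (wk_nonneg k P x) r),
      Real.rpow_pow_comm (alpha_pos k).le]
    exact Real.rpow_le_rpow (wk_nonneg k P x)
      (wk_le_of_notMem_JUnion hk hP (Set.disjoint_left.1 hdisj hx)) hr
  have hint : ∫ x in ivl I, wk k P x ^ r ≤ (alpha k ^ r) ^ l * len I := by
    have hvol : volume.real (ivl I) = len I := by
      rw [measureReal_def, volume_ivl, ENNReal.toReal_ofReal hI.le]
    rw [← hvol]
    exact (Real.le_norm_self _).trans
      (norm_setIntegral_le_of_norm_le_const (volume_ivl I ▸ ENNReal.ofReal_lt_top) hpt)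
  rwa [inv_mul_le_iff₀ hI, mul_comm]

lemma average_wk_rpow_le (hk : 1 ≤ k) (hP : GoodP k P) (hr₀ : 0 < r)
    (hr : r ≤ 1 + 1 / (3 : ℝ) ^ (k + 1)) {I : ℝ × ℝ} (hI : IsTriadic I)
    (hlen : len I = ((3 : ℝ) ^ k)⁻¹ ^ l) :
    (len I)⁻¹ * ∫ x in ivl I, wk k P x ^ r ≤ 3 * (alpha k ^ r) ^ l := by
  rcases disjoint_or_nonempty_inter (ivl I) (JUnion k (l + 1)) with hdisj | hmeet
  · refine (average_wk_rpow_le_of_disjoint_JUnion hk hP hr₀.le hI.len_pos hdisj).trans ?_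
    have : 0 < alpha k ^ r := Real.rpow_pos_of_pos (alpha_pos k) r
    exact le_mul_of_one_le_left (by positivity) (by norm_num)
  · obtain ⟨x, hxI, hx⟩ := hmeet
    obtain ⟨J, hJ, hxJ⟩ := mem_JUnion.1 hx
    obtain rfl : I = J := (isTriadic_of_mem_Jfam hJ).eq_of_len_eq hI
      (hlen.trans (len_of_mem_Jfam hJ).symm) ⟨x, hxJ, hxI⟩
    exact average_wk_rpow_le_of_mem_Jfam hk hP hr₀ hr hJ

theorem statement4_general (hk : 1 ≤ k) (hP : GoodP k P) (hr₁ : 1 ≤ r)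
    (hr : r ≤ 1 + 1 / (3 : ℝ) ^ (k + 1)) {I : ℝ × ℝ} (hI : IsTriadic I)
    (hlen : len I = ((3 : ℝ) ^ k)⁻¹ ^ l) :
    ((len I)⁻¹ * ∫ x in ivl I, wk k P x ^ r) ^ (1 / r) ≤ 3 * alpha k ^ l := by
  have hr₀ : 0 < r := by linarith
  have hα := (alpha_pos k).le
  have havg : 0 ≤ (len I)⁻¹ * ∫ x in ivl I, wk k P x ^ r :=
    mul_nonneg (inv_nonneg.2 hI.len_pos.le)
      (integral_nonneg fun x ↦ Real.rpow_nonneg (wk_nonneg k P x) r)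
  rw [one_div, Real.rpow_inv_le_iff_of_pos havg (by positivity) hr₀]
  calc (len I)⁻¹ * ∫ x in ivl I, wk k P x ^ r ≤ 3 * (alpha k ^ r) ^ l :=
        average_wk_rpow_le hk hP hr₀ hr hI hlen
    _ ≤ 3 ^ r * (alpha k ^ r) ^ l := by
        gcongr
        exact Real.self_le_rpow_of_one_le (by norm_num) hr₁
    _ = (3 * alpha k ^ l) ^ r := by
        rw [Real.rpow_pow_comm hα, Real.mul_rpow zero_le_three (pow_nonneg hα l)]

end Weight

/-- **the claim (2.5) in Lemma 2.2.** With `r = 1 + 1/3^{k+1}`,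
for `l ≥ 1`, `I ∈ ℐ_l` and any triadic `I' ⊆ [0,1)` with `|I'| = |I|` meeting
`⋃_{j≥1} Ω_j`, one has `((1/|I'|) ∫_{I'} w_k^r)^{1/r} ≤ 3 (3^k/(3^{k-1}+1))^l`. -/
theorem statement4 (k : ℕ) (hk : 2 ≤ k) (P : ℝ × ℝ → ℝ × ℝ) (hP : GoodP k P)
    (r : ℝ) (hr : r = 1 + 1 / (3:ℝ) ^ (k + 1))
    (l : ℕ) (hl : 1 ≤ l) (I : ℝ × ℝ) (hI : I ∈ Ifam k P l)
    (I' : ℝ × ℝ) (hI'tri : IsTriadic I') (hI'sub : ivl I' ⊆ Ico (0:ℝ) 1)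
    (hlen : len I' = len I)
    (hmeet : (ivl I' ∩ ⋃ j : ℕ, Omega k P (j + 1)).Nonempty) :
    ((len I')⁻¹ * ∫ x in ivl I', wk k P x ^ r) ^ (1 / r) ≤ 3 * alpha k ^ l :=
  statement4_general (by omega) hP (hr ▸ by simp) hr.le hI'tri
    (hlen.trans (len_of_mem_Ifam hP hI))

end RT

end
end

section
/- For every integer k ≥ 1, one has (3^k/(3^{k−1}+1))^{1 + 1/3^{k+1}} ≤ 3 − 2/(3^{k−1}+1). In particular, 3^{1/3^{k+1}} · 3^k/(3^{k−1}+1) ≤ (1 + 1/3^k) · 3^k/(3^{k−1}+1) = 3 − 2/(3^{k−1}+1). -/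
open MeasureTheory Set Filter Topology
open scoped ENNReal

noncomputable section

namespace RT

/-! Put `p = b ^ (-(s + 1))` and `α = b ^ s / (b ^ (s - 1) + 1)`. Since `α ≤ b`, the power
`α ^ (1 + p)` is at most `b ^ p * α`. If `b ≤ 1` then `b ^ p ≤ 1`; otherwise `p ≤ 1`, and
Bernoulli's inequality gives `b ^ p ≤ 1 + p * (b - 1) ≤ 1 + p * b = 1 + b ^ (-s)`. Finally
`(1 + b ^ (-s)) * α` is a rational function of `b` and `b ^ (s - 1)`, which simplifies to
`b - (b - 1) / (b ^ (s - 1) + 1)`. -/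

lemma rpow_one_add_le_rpow_mul {a b p : ℝ} (ha : 0 ≤ a) (hab : a ≤ b) (hp : 0 ≤ p) :
    a ^ (1 + p) ≤ b ^ p * a :=
  calc a ^ (1 + p) = a ^ p * a := by
        rw [Real.rpow_add_of_nonneg ha zero_le_one hp, Real.rpow_one, mul_comm]
    _ ≤ b ^ p * a := by gcongr

lemma rpow_le_one_add_mul {b p : ℝ} (hb : 0 ≤ b) (hp : 0 ≤ p) (hp1 : p ≤ 1) :
    b ^ p ≤ 1 + p * b :=
  calc b ^ p = (1 + (b - 1)) ^ p := by rw [add_sub_cancel]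
    _ ≤ 1 + p * (b - 1) := rpow_one_add_le_one_add_mul_self (by linarith) hp hp1
    _ ≤ 1 + p * b := by gcongr; linarith

lemma rpow_one_div_rpow_add_one_le {b s : ℝ} (hb : 0 < b) (hs : -1 ≤ s) :
    b ^ (1 / b ^ (s + 1)) ≤ 1 + 1 / b ^ s := by
  rcases le_total b 1 with hb1 | hb1
  · calc b ^ (1 / b ^ (s + 1)) ≤ 1 := Real.rpow_le_one hb.le hb1 (by positivity)
      _ ≤ 1 + 1 / b ^ s := le_add_of_nonneg_right (by positivity)
  · have exponent_le_one : 1 / b ^ (s + 1) ≤ 1 :=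
      div_le_one_of_le₀ (Real.one_le_rpow hb1 (by linarith)) (by positivity)
    calc b ^ (1 / b ^ (s + 1)) ≤ 1 + 1 / b ^ (s + 1) * b :=
          rpow_le_one_add_mul hb.le (by positivity) exponent_le_one
      _ = 1 + 1 / b ^ s := by rw [Real.rpow_add_one hb.ne']; field_simp

lemma rpow_div_rpow_sub_one_add_one_le {b : ℝ} (hb : 0 < b) (s : ℝ) :
    b ^ s / (b ^ (s - 1) + 1) ≤ b := by
  rw [div_le_iff₀ (by positivity), mul_add_one, Real.rpow_sub_one hb.ne', mul_div_cancel₀ _ hb.ne']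
  exact le_add_of_nonneg_right hb.le

lemma one_add_one_div_rpow_mul_eq {b : ℝ} (hb : 0 < b) (s : ℝ) :
    (1 + 1 / b ^ s) * (b ^ s / (b ^ (s - 1) + 1)) = b - (b - 1) / (b ^ (s - 1) + 1) := by
  have rpow_eq : b ^ s = b * b ^ (s - 1) := by
    rw [Real.rpow_sub_one hb.ne', mul_div_cancel₀ _ hb.ne']
  rw [rpow_eq]
  field_simp
  ring

theorem statement6_general {b s : ℝ} (hb : 0 < b) (hs : -1 ≤ s) :
    (b ^ s / (b ^ (s - 1) + 1)) ^ (1 + 1 / b ^ (s + 1)) ≤ b - (b - 1) / (b ^ (s - 1) + 1) ∧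
      b ^ (1 / b ^ (s + 1)) * (b ^ s / (b ^ (s - 1) + 1))
        ≤ (1 + 1 / b ^ s) * (b ^ s / (b ^ (s - 1) + 1)) ∧
      (1 + 1 / b ^ s) * (b ^ s / (b ^ (s - 1) + 1)) = b - (b - 1) / (b ^ (s - 1) + 1) := by
  have factor_le : b ^ (1 / b ^ (s + 1)) * (b ^ s / (b ^ (s - 1) + 1))
      ≤ (1 + 1 / b ^ s) * (b ^ s / (b ^ (s - 1) + 1)) := by
    gcongr
    exact rpow_one_div_rpow_add_one_le hb hs
  refine ⟨?_, factor_le, one_add_one_div_rpow_mul_eq hb s⟩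
  calc (b ^ s / (b ^ (s - 1) + 1)) ^ (1 + 1 / b ^ (s + 1))
      ≤ b ^ (1 / b ^ (s + 1)) * (b ^ s / (b ^ (s - 1) + 1)) :=
        rpow_one_add_le_rpow_mul (by positivity) (rpow_div_rpow_sub_one_add_one_le hb s)
          (by positivity)
    _ ≤ (1 + 1 / b ^ s) * (b ^ s / (b ^ (s - 1) + 1)) := factor_le
    _ = b - (b - 1) / (b ^ (s - 1) + 1) := one_add_one_div_rpow_mul_eq hb s

/-- For every integer `k ≥ 1`,
`(3^k/(3^{k-1}+1))^{1+1/3^{k+1}} ≤ 3 − 2/(3^{k-1}+1)`; in particular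
`3^{1/3^{k+1}} · 3^k/(3^{k-1}+1) ≤ (1 + 1/3^k) · 3^k/(3^{k-1}+1)
  = 3 − 2/(3^{k-1}+1)`. -/
theorem statement6 (k : ℕ) (hk : 1 ≤ k) :
    ((3:ℝ) ^ k / ((3:ℝ) ^ (k - 1) + 1)) ^ ((1:ℝ) + 1 / (3:ℝ) ^ (k + 1))
        ≤ 3 - 2 / ((3:ℝ) ^ (k - 1) + 1) ∧
      (3:ℝ) ^ ((1:ℝ) / (3:ℝ) ^ (k + 1)) * ((3:ℝ) ^ k / ((3:ℝ) ^ (k - 1) + 1))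
        ≤ (1 + 1 / (3:ℝ) ^ k) * ((3:ℝ) ^ k / ((3:ℝ) ^ (k - 1) + 1)) ∧
      (1 + 1 / (3:ℝ) ^ k) * ((3:ℝ) ^ k / ((3:ℝ) ^ (k - 1) + 1))
        = 3 - 2 / ((3:ℝ) ^ (k - 1) + 1) := by
  have three_sub_one : (3 : ℝ) - 1 = 2 := by norm_num
  simpa only [three_sub_one, ← Nat.cast_pred hk, ← Nat.cast_succ, Real.rpow_natCast] using
    statement6_general (b := 3) (s := k) three_pos (neg_one_lt_zero.le.trans k.cast_nonneg)

end RT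

end
end
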